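/- If n ≠ 2m with 1 ≤ m < n, then for every pair of distinct x, y ∈ X (0-1 tuples of length n with exactly m ones) there exists j with 1 ≤ j ≤ n−1 such that q_{x_j,x_{j+1}} ≠ q_{y_j,y_{j+1}}, where q_{a,b} = 1 if a = b and q_{a,b} = t if a ≠ b. -/

import Mathlib

/-- The set of 0-1 `n`-tuples with exactly `m` ones. -/
def Xm (n m : ℕ) : Set (Fin n → ℕ) :=
  {x | (∀ i, x i ≤ 1) ∧ (Finset.univ.filter fun i => x i = 1).card = m}

/-- If `n ≠ 2m` (with `1 ≤ m < n`), then for every pair of distinct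
`x, y ∈ X` there exists `j` with `q_{x_j,x_{j+1}} ≠ q_{y_j,y_{j+1}}`, where `q_{a,b} = 1`
if `a = b` and `q_{a,b} = t` if `a ≠ b`. -/
theorem phi_m_coefficients_separate (n m : ℕ) (hn : 2 < n) (hm1 : 1 ≤ m) (hmn : m < n)
    (hn2m : n ≠ 2 * m) (t : ℝ) (ht0 : t ≠ 0) (ht1 : t ≠ 1) (ht2 : t ≠ -1)
    (x y : ↥(Xm n m)) (hxy : x ≠ y) :
    ∃ (j : ℕ) (hj : j + 1 < n),
      (if x.1 ⟨j, Nat.lt_of_succ_lt hj⟩ = x.1 ⟨j + 1, hj⟩ then (1 : ℝ) else t) ≠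
        (if y.1 ⟨j, Nat.lt_of_succ_lt hj⟩ = y.1 ⟨j + 1, hj⟩ then (1 : ℝ) else t) := by
  by_contra hcon
  push Not at hcon
  obtain ⟨x, hx, hxm⟩ := x
  obtain ⟨y, hy, hym⟩ := y
  simp only at hcon
  have h0 : 0 < n := by omega
  have key : ∀ (j : ℕ) (hj : j < n), (x ⟨j, hj⟩ = y ⟨j, hj⟩ ↔ x ⟨0, h0⟩ = y ⟨0, h0⟩) := by
    intro j
    induction j with
    | zero => intro hj; rfl
    | succ k ih =>
      intro hj
      rw [← ih (by omega)]
      have h := hcon k hj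
      have a1 := hx ⟨k, by omega⟩
      have a2 := hx ⟨k + 1, hj⟩
      have b1 := hy ⟨k, by omega⟩
      have b2 := hy ⟨k + 1, hj⟩
      split_ifs at h with h1 h2 h2
      · omega
      · exact absurd h.symm ht1
      · exact absurd h ht1
      · omega
  by_cases he : x ⟨0, h0⟩ = y ⟨0, h0⟩
  · apply hxy
    apply Subtype.ext
    funext i
    exact (key i.1 i.2).2 he
  · have hc : (Finset.univ.filter fun i => y i = 1) =
        (Finset.univ.filter fun i => ¬ x i = 1) := by
      ext i
      have h1 : ¬ x i = y i := fun h => he ((key i.1 i.2).1 h)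
      have a1 := hx i
      have b1 := hy i
      simp only [Finset.mem_filter, Finset.mem_univ, true_and]
      omega
    have hs := Finset.card_filter_add_card_filter_not (s := (Finset.univ : Finset (Fin n)))
      (fun i => x i = 1)
    rw [← hc, hxm, hym, Finset.card_univ, Fintype.card_fin] at hs
    omega
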